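/- Let ℬ be a TBPP and 𝒜 its linearization. For all nonterminals S, A, B of ℬ and clock valuations μ, ν₁, ν₂: {(S,μ)} ↝cover {(A,ν₁), (B,ν₂)} in ℬ if and only if there exist a branching rule C →(φ;U) D₁ ⊎ D₂ of ℬ, a valuation κ with κ ⊨ φ, and durations t₀, t₁ ≥ 0 such that, in the timed automaton 𝒜, (S,μ) →*(t₀) (C,κ) and, for some bijection assigning {D₁,D₂} to the two targets, (D_i, κ[U]) →*(t₁) (A,ν₁) and (D_j, κ[U]) →*(t₁) (B,ν₂) with {i,j} = {1,2} (both branches taking the same time t₁). -/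

import Mathlib

/-!
Time elapses synchronously and every process may always idle, so processes evolve independently
of one another, and only the total duration links two runs that are placed side by side.

From right to left, runs of the linearization lift to runs of the TBPP up to additional processes
(`Run.lift`), and two runs of *equal* duration can be interleaved into one run of the sum of their
configurations (`Run.par`). The interleaving cuts the second run at the times of the first one
(`Run.split`) and lets one component idle while the other moves (`Run.idle`).

From left to right, the ancestor line of a process in a run of the TBPP is a run of the
linearization (`Run.lineage`). For two distinct processes of the final configuration, follow
both ancestor lines backwards: either they stay distinct all the way to the initial configuration,
or they merge at a branching step (`Run.lineage_pair`). If the initial configuration is a single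
process, only the second case is possible. Distinctness refers to occurrences in the multiset:
`{q₁, q₂} ≤ β` allows `q₁ = q₂` when this value has multiplicity at least two in `β`.
-/

open scoped NNReal

namespace TBPPcore

/-- Comparison operators allowed in clock constraints. -/
inductive Cmp | lt | le | eq | ge | gt

/-- Satisfaction of a comparison between two nonnegative reals. -/
def Cmp.Sat : Cmp → ℝ≥0 → ℝ≥0 → Prop
  | .lt, a, b => a < b
  | .le, a, b => a ≤ b
  | .eq, a, b => a = b
  | .ge, a, b => a ≥ b
  | .gt, a, b => a > b

/-- An atomic clock constraint `x ⋈ k`. -/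
structure GuardAtom (C : Type) where
  clock : C
  cmp : Cmp
  bound : ℕ

/-- A clock valuation. -/
abbrev Val (C : Type) := C → ℝ≥0

/-- A guard is a (finite) conjunction of atomic clock constraints;
the empty list is the trivial constraint `true`. -/
def GuardSat {C : Type} (μ : Val C) (g : List (GuardAtom C)) : Prop :=
  ∀ a ∈ g, a.cmp.Sat (μ a.clock) (a.bound : ℝ≥0)

/-- An assignment `x := e` where `e` is a clock or a natural-number constant. -/
structure Assign (C : Type) where
  lhs : C
  rhs : C ⊕ ℕ

def applyAssign {C : Type} [DecidableEq C] (μ : Val C) (a : Assign C) : Val C :=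
  Function.update μ a.lhs (Sum.elim μ (fun k => (k : ℝ≥0)) a.rhs)

/-- Execute a sequence of assignments in order. -/
def applyUpdates {C : Type} [DecidableEq C] (μ : Val C) (U : List (Assign C)) : Val C :=
  U.foldl applyAssign μ

/-- A rule `A →(φ; U) α`. -/
structure Rule (C X : Type) where
  src : X
  guard : List (GuardAtom C)
  update : List (Assign C)
  rhs : Multiset X

/-- A timed basic parallel process: a finite set of rules whose right-hand
sides have size at most 2 (clocks `C` and nonterminals `X` are type
parameters; finiteness of the nonterminal set is imposed where needed). -/
structure TBPP (C X : Type) where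
  rules : Set (Rule C X)
  finite : rules.Finite
  small : ∀ r ∈ rules, Multiset.card r.rhs ≤ 2

/-- A configuration: a finite multiset of processes. -/
abbrev Config (C X : Type) := Multiset (X × Val C)

/-- Elapse `t` time units in every process of a configuration. -/
def shift {C X : Type} (t : ℝ≥0) (α : Config C X) : Config C X :=
  α.map (fun p => (p.1, fun c => p.2 c + t))

variable {C X : Type} [DecidableEq C]

/-- One transition: either a time elapse or a discrete rule application. -/
inductive Step (B : TBPP C X) : Config C X → ℝ≥0 → Config C X → Prop
  | elapse (α : Config C X) (t : ℝ≥0) : Step B α t (shift t α)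
  | discrete (β : Config C X) (r : Rule C X) (μ : Val C)
      (hr : r ∈ B.rules) (hg : GuardSat μ r.guard) :
      Step B (β + {(r.src, μ)}) 0
        (β + r.rhs.map (fun Y => (Y, applyUpdates μ r.update)))

/-- `Run B α t β`: a finite sequence of transitions from `α` to `β`
whose delays sum to `t`. -/
inductive Run (B : TBPP C X) : Config C X → ℝ≥0 → Config C X → Prop
  | refl (α : Config C X) : Run B α 0 α
  | tail {α β γ : Config C X} {t s : ℝ≥0} :
      Run B α t β → Step B β s γ → Run B α (t + s) γ

/-- `α →* β`. -/
def Reach (B : TBPP C X) (α β : Config C X) : Prop := ∃ t, Run B α t β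

/-- Coverability: `α ↝cover β`. -/
def Cover (B : TBPP C X) (α β : Config C X) : Prop :=
  ∃ γ, Reach B α γ ∧ β ≤ γ

/-- A timed automaton is a TBPP all of whose rules have right-hand side of size 1. -/
def IsTA (B : TBPP C X) : Prop := ∀ r ∈ B.rules, Multiset.card r.rhs = 1

/-- The valuation of a single clock. -/
def cval (u : ℝ≥0) : Val Unit := fun _ => u

end TBPPcore

namespace TBPPcore

/-- `𝒜` is the linearization of `ℬ`: it keeps all rules of `ℬ` with
right-hand side of size 1, replaces every branching rule `A →(φ;U) B₁ ⊎ B₂`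
by the two rules `A →(φ;U) B₁` and `A →(φ;U) B₂`, and drops vanishing rules. -/
def IsLinearization {C X : Type} (ℬ 𝒜 : TBPP C X) : Prop :=
  𝒜.rules =
    {r | r ∈ ℬ.rules ∧ Multiset.card r.rhs = 1} ∪
    {r' | ∃ r ∈ ℬ.rules, Multiset.card r.rhs = 2 ∧
      ∃ Y ∈ r.rhs, r' = ⟨r.src, r.guard, r.update, {Y}⟩}

end TBPPcore

namespace TBPPcore

/-! ### Idling, cutting and interleaving runs -/

section Basic

variable {C X : Type}

theorem shift_zero (α : Config C X) : shift 0 α = α := by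
  simp [shift]

theorem shift_add (t : ℝ≥0) (α β : Config C X) : shift t (α + β) = shift t α + shift t β := by
  simp [shift]

theorem shift_shift (s t : ℝ≥0) (α : Config C X) : shift t (shift s α) = shift (s + t) α := by
  simp [shift, add_assoc]

variable [DecidableEq C]

theorem Step.run {B : TBPP C X} {α β : Config C X} {t : ℝ≥0} (h : Step B α t β) :
    Run B α t β := by
  simpa using Run.tail (Run.refl α) h

theorem Run.trans {B : TBPP C X} {α β γ : Config C X} {t s : ℝ≥0}
    (h₁ : Run B α t β) (h₂ : Run B β s γ) : Run B α (t + s) γ := by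
  induction h₂ with
  | refl => simpa using h₁
  | tail _ hs ih => rw [← add_assoc]; exact ih.tail hs

/-- A run remains a run next to processes that idle throughout. -/
theorem Run.idle {B : TBPP C X} {α β : Config C X} {t : ℝ≥0} (h : Run B α t β)
    (ρ : Config C X) : Run B (ρ + α) t (shift t ρ + β) := by
  induction h with
  | refl => rw [shift_zero]; exact Run.refl _
  | @tail _ _ t _ _ hs ih =>
    refine ih.tail ?_
    cases hs with
    | elapse s =>
      rw [← shift_shift, ← shift_add]
      exact Step.elapse _ _
    | discrete β r μ hr hg =>
      rw [add_zero, ← add_assoc, ← add_assoc]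
      exact Step.discrete _ r μ hr hg

/-- A run can be cut at any time up to its duration, if necessary inside a time elapse. -/
theorem Run.split {B : TBPP C X} {α γ : Config C X} {u : ℝ≥0} (h : Run B α u γ) :
    ∀ a b : ℝ≥0, u = a + b → ∃ β, Run B α a β ∧ Run B β b γ := by
  induction h with
  | refl =>
    intro a b hab
    obtain ⟨rfl, rfl⟩ := add_eq_zero.1 hab.symm
    exact ⟨α, Run.refl α, Run.refl α⟩
  | @tail β γ t s hr hs ih =>
    intro a b hab
    rcases le_total a t with hat | hat
    · obtain ⟨c, rfl⟩ := exists_add_of_le hat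
      obtain ⟨δ, h₁, h₂⟩ := ih a c rfl
      have hb : c + s = b := add_left_cancel (by rw [← add_assoc, hab])
      exact ⟨δ, h₁, hb ▸ h₂.tail hs⟩
    · obtain ⟨c, rfl⟩ := exists_add_of_le hat
      have hcb : s = c + b := add_left_cancel (a := t) (by rw [hab, add_assoc])
      cases hs with
      | elapse =>
        subst hcb
        refine ⟨shift c β, hr.tail (Step.elapse _ _), ?_⟩
        rw [← shift_shift]
        exact (Step.elapse _ _).run
      | discrete β r μ hmem hg =>
        obtain ⟨rfl, rfl⟩ := add_eq_zero.1 hcb.symm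
        exact ⟨_, by simpa using hr, (Step.discrete β r μ hmem hg).run⟩

/-- Two runs of equal duration can be interleaved. -/
theorem Run.par {B : TBPP C X} {α β : Config C X} {t : ℝ≥0} (h : Run B α t β) :
    ∀ {α' β' : Config C X}, Run B α' t β' → Run B (α + α') t (β + β') := by
  induction h with
  | refl =>
    intro α' β' h'
    simpa [shift_zero] using h'.idle α
  | tail _ hs ih =>
    intro α' β' h'
    obtain ⟨δ, h₁, h₂⟩ := h'.split _ _ rfl
    refine (ih h₁).trans ?_
    cases hs with
    | elapse => exact h₂.idle _
    | discrete β r μ hr hg =>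
      have hd := (Step.discrete β r μ hr hg).run.idle δ
      have hi := h₂.idle (β + r.rhs.map (fun Y => (Y, applyUpdates μ r.update)))
      rw [shift_zero] at hd hi
      rw [add_comm δ, add_comm δ] at hd
      simpa using hd.trans hi

end Basic

/-! ### Lifting runs and tracing ancestor lines -/

section Linearization

variable {C X : Type} {ℬ 𝒜 : TBPP C X}

theorem IsLinearization.mem_of_mem_rhs (hlin : IsLinearization ℬ 𝒜) {r : Rule C X}
    (hr : r ∈ ℬ.rules) {Y : X} (hY : Y ∈ r.rhs) :
    (⟨r.src, r.guard, r.update, {Y}⟩ : Rule C X) ∈ 𝒜.rules := by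
  have hpos : 0 < Multiset.card r.rhs := Multiset.card_pos_iff_exists_mem.2 ⟨Y, hY⟩
  have hle := ℬ.small r hr
  rw [hlin]
  by_cases h1 : Multiset.card r.rhs = 1
  · left
    obtain ⟨Z, hZ⟩ := Multiset.card_eq_one.1 h1
    have hYZ : Y = Z := by simpa [hZ] using hY
    have : (⟨r.src, r.guard, r.update, {Y}⟩ : Rule C X) = r := by
      rw [hYZ, ← hZ]
    rw [this]
    exact ⟨hr, h1⟩
  · right
    exact ⟨r, hr, by omega, Y, hY, rfl⟩

theorem IsLinearization.exists_of_mem (hlin : IsLinearization ℬ 𝒜) {r' : Rule C X}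
    (hr' : r' ∈ 𝒜.rules) :
    ∃ r ∈ ℬ.rules, ∃ Y ∈ r.rhs, r' = ⟨r.src, r.guard, r.update, {Y}⟩ := by
  rw [hlin] at hr'
  rcases hr' with ⟨hr, h1⟩ | ⟨r, hr, _, Y, hY, rfl⟩
  · obtain ⟨Y, hY⟩ := Multiset.card_eq_one.1 h1
    exact ⟨r', hr, Y, by simp [hY], by rw [← hY]⟩
  · exact ⟨r, hr, Y, hY, rfl⟩

variable [DecidableEq C]

/-- A step of the linearization is matched by the TBPP from any larger configuration. -/
theorem Step.lift (hlin : IsLinearization ℬ 𝒜) {α β : Config C X} {t : ℝ≥0}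
    (h : Step 𝒜 α t β) {α' : Config C X} (hα : α ≤ α') :
    ∃ β', Step ℬ α' t β' ∧ β ≤ β' := by
  cases h with
  | elapse => exact ⟨shift t α', Step.elapse _ _, Multiset.map_le_map hα⟩
  | discrete β r' μ hr' hg =>
    obtain ⟨r, hr, Y, hY, rfl⟩ := hlin.exists_of_mem hr'
    obtain ⟨ρ, rfl⟩ := Multiset.le_iff_exists_add.1 hα
    have hs := Step.discrete (β + ρ) r μ hr hg
    rw [add_right_comm] at hs
    refine ⟨_, hs, ?_⟩
    refine add_le_add (Multiset.le_add_right _ _) ?_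
    simpa using hY

theorem Run.lift (hlin : IsLinearization ℬ 𝒜) {α β : Config C X} {t : ℝ≥0}
    (h : Run 𝒜 α t β) : ∃ β', Run ℬ α t β' ∧ β ≤ β' := by
  induction h with
  | refl => exact ⟨α, Run.refl α, le_rfl⟩
  | tail _ hs ih =>
    obtain ⟨β', hr, hle⟩ := ih
    obtain ⟨γ', hs', hle'⟩ := hs.lift hlin hle
    exact ⟨γ', hr.tail hs', hle'⟩

theorem IsLinearization.run_of_mem_rhs (hlin : IsLinearization ℬ 𝒜) {r : Rule C X}
    (hr : r ∈ ℬ.rules) {μ : Val C} (hg : GuardSat μ r.guard) {q : X × Val C}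
    (hq : q ∈ r.rhs.map (fun Y => (Y, applyUpdates μ r.update))) :
    Run 𝒜 {(r.src, μ)} 0 {q} := by
  obtain ⟨Y, hY, rfl⟩ := Multiset.mem_map.1 hq
  simpa using (Step.discrete 0 _ μ (hlin.mem_of_mem_rhs hr hY) hg).run

theorem Step.lineage (hlin : IsLinearization ℬ 𝒜) {α β : Config C X} {t : ℝ≥0}
    (h : Step ℬ α t β) {q : X × Val C} (hq : q ∈ β) : ∃ p ∈ α, Run 𝒜 {p} t {q} := by
  cases h with
  | elapse =>
    obtain ⟨p, hp, rfl⟩ := Multiset.mem_map.1 hq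
    exact ⟨p, hp, by simpa [shift] using (Step.elapse (B := 𝒜) {p} t).run⟩
  | discrete β r μ hr hg =>
    rcases Multiset.mem_add.1 hq with hq | hq
    · exact ⟨q, Multiset.mem_add.2 (Or.inl hq), Run.refl _⟩
    · exact ⟨(r.src, μ), by simp, hlin.run_of_mem_rhs hr hg hq⟩

/-- The ancestor line of a process is a run of the linearization. -/
theorem Run.lineage (hlin : IsLinearization ℬ 𝒜) {α β : Config C X} {t : ℝ≥0}
    (h : Run ℬ α t β) : ∀ {q : X × Val C}, q ∈ β → ∃ p ∈ α, Run 𝒜 {p} t {q} := by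
  induction h with
  | refl => exact fun {q} hq => ⟨q, hq, Run.refl _⟩
  | tail _ hs ih =>
    intro q hq
    obtain ⟨p', hp', hstep⟩ := hs.lineage hlin hq
    obtain ⟨p, hp, hrun⟩ := ih hp'
    exact ⟨p, hp, hrun.trans hstep⟩

/-- `p` reaches in `𝒜` the source of a branching rule of `ℬ`, at valuation `κ`, and the two
children created by that rule reach `q₁` and `q₂` in `𝒜`, in the same time `t₁`. -/
def SplitRun (ℬ 𝒜 : TBPP C X) (p q₁ q₂ : X × Val C) : Prop :=
  ∃ r ∈ ℬ.rules, ∃ D₁ D₂ : X, r.rhs = {D₁, D₂} ∧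
    ∃ (κ : Val C) (t₀ t₁ : ℝ≥0), GuardSat κ r.guard ∧
      Run 𝒜 {p} t₀ {(r.src, κ)} ∧
      Run 𝒜 {(D₁, applyUpdates κ r.update)} t₁ {q₁} ∧
      Run 𝒜 {(D₂, applyUpdates κ r.update)} t₁ {q₂}

theorem SplitRun.trans {p q₁ q₂ q₁' q₂' : X × Val C} {s : ℝ≥0} (h : SplitRun ℬ 𝒜 p q₁ q₂)
    (h₁ : Run 𝒜 {q₁} s {q₁'}) (h₂ : Run 𝒜 {q₂} s {q₂'}) : SplitRun ℬ 𝒜 p q₁' q₂' := by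
  obtain ⟨r, hr, D₁, D₂, hD, κ, t₀, t₁, hg, h₀, hr₁, hr₂⟩ := h
  exact ⟨r, hr, D₁, D₂, hD, κ, t₀, t₁ + s, hg, h₀, hr₁.trans h₁, hr₂.trans h₂⟩

theorem pair_le_add {T : Type} {a b : T} {s t : Multiset T} (h : {a, b} ≤ s + t) :
    {a, b} ≤ s ∨ (a ∈ s ∧ b ∈ t) ∨ (b ∈ s ∧ a ∈ t) ∨ {a, b} ≤ t := by
  have ha : a ∈ s + t := Multiset.mem_of_le h (by simp)
  rcases Multiset.mem_add.1 ha with ha | ha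
  · obtain ⟨s', rfl⟩ := Multiset.exists_cons_of_mem ha
    have h' : {b} ≤ s' + t := by
      rwa [Multiset.cons_add, Multiset.insert_eq_cons, Multiset.cons_le_cons_iff] at h
    rcases Multiset.mem_add.1 (Multiset.singleton_le.1 h') with hb | hb
    · exact Or.inl ((Multiset.cons_le_cons_iff a).2 (Multiset.singleton_le.2 hb))
    · exact Or.inr (Or.inl ⟨ha, hb⟩)
  · obtain ⟨t', rfl⟩ := Multiset.exists_cons_of_mem ha
    have h' : {b} ≤ s + t' := by
      rwa [Multiset.add_cons, Multiset.insert_eq_cons, Multiset.cons_le_cons_iff] at h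
    rcases Multiset.mem_add.1 (Multiset.singleton_le.1 h') with hb | hb
    · exact Or.inr (Or.inr (Or.inl ⟨hb, ha⟩))
    · exact Or.inr (Or.inr (Or.inr
        ((Multiset.cons_le_cons_iff a).2 (Multiset.singleton_le.2 hb))))

theorem pair_le_map {T T' : Type} {f : T → T'} {a b : T'} {s : Multiset T}
    (h : {a, b} ≤ s.map f) : ∃ x y, {x, y} ≤ s ∧ f x = a ∧ f y = b := by
  have ha : a ∈ s.map f := Multiset.mem_of_le h (by simp)
  obtain ⟨x, hx, rfl⟩ := Multiset.mem_map.1 ha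
  obtain ⟨s', rfl⟩ := Multiset.exists_cons_of_mem hx
  rw [Multiset.map_cons, Multiset.insert_eq_cons, Multiset.cons_le_cons_iff,
    Multiset.singleton_le] at h
  obtain ⟨y, hy, rfl⟩ := Multiset.mem_map.1 h
  exact ⟨x, y, (Multiset.cons_le_cons_iff x).2 (Multiset.singleton_le.2 hy), rfl, rfl⟩

/-- Two distinct processes after a step have distinct parents, or they are the two children of
one process to which a branching rule was applied. -/
theorem Step.lineage_pair (hlin : IsLinearization ℬ 𝒜) {α β : Config C X} {t : ℝ≥0}
    (h : Step ℬ α t β) {q₁ q₂ : X × Val C} (hq : {q₁, q₂} ≤ β) :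
    (∃ p₁ p₂, {p₁, p₂} ≤ α ∧ Run 𝒜 {p₁} t {q₁} ∧ Run 𝒜 {p₂} t {q₂}) ∨
      ∃ p ∈ α, SplitRun ℬ 𝒜 p q₁ q₂ := by
  cases h with
  | elapse =>
    left
    obtain ⟨p₁, p₂, hp, rfl, rfl⟩ := pair_le_map hq
    exact ⟨p₁, p₂, hp, by simpa [shift] using (Step.elapse (B := 𝒜) {p₁} t).run,
      by simpa [shift] using (Step.elapse (B := 𝒜) {p₂} t).run⟩
  | discrete β r μ hr hg =>
    rcases pair_le_add hq with hq | ⟨h₁, h₂⟩ | ⟨h₂, h₁⟩ | hq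
    · exact Or.inl ⟨q₁, q₂, hq.trans (Multiset.le_add_right _ _), Run.refl _, Run.refl _⟩
    · refine Or.inl ⟨q₁, (r.src, μ), ?_, Run.refl _, hlin.run_of_mem_rhs hr hg h₂⟩
      exact add_le_add (Multiset.singleton_le.2 h₁) le_rfl
    · refine Or.inl ⟨(r.src, μ), q₂, ?_, hlin.run_of_mem_rhs hr hg h₁, Run.refl _⟩
      rw [Multiset.pair_comm]
      exact add_le_add (Multiset.singleton_le.2 h₂) le_rfl
    · refine Or.inr ⟨(r.src, μ), by simp, ?_⟩
      obtain ⟨D₁, D₂, hD, rfl, rfl⟩ := pair_le_map hq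
      have hrhs : {D₁, D₂} = r.rhs :=
        Multiset.eq_of_le_of_card_le hD (by simpa using ℬ.small r hr)
      exact ⟨r, hr, D₁, D₂, hrhs.symm, μ, 0, 0, hg, Run.refl _, Run.refl _, Run.refl _⟩

/-- Two distinct processes at the end of a run have distinct ancestors at its start, or their
ancestor lines meet at a branching step. -/
theorem Run.lineage_pair (hlin : IsLinearization ℬ 𝒜) {α β : Config C X} {t : ℝ≥0}
    (h : Run ℬ α t β) : ∀ {q₁ q₂ : X × Val C}, {q₁, q₂} ≤ β →
    (∃ p₁ p₂, {p₁, p₂} ≤ α ∧ Run 𝒜 {p₁} t {q₁} ∧ Run 𝒜 {p₂} t {q₂}) ∨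
      ∃ p ∈ α, SplitRun ℬ 𝒜 p q₁ q₂ := by
  induction h with
  | refl => exact fun {q₁ q₂} hq => Or.inl ⟨q₁, q₂, hq, Run.refl _, Run.refl _⟩
  | tail hr hs ih =>
    intro q₁ q₂ hq
    rcases hs.lineage_pair hlin hq with
      ⟨p₁', p₂', hp', h₁', h₂'⟩ | ⟨p', hp', r, hmem, D₁, D₂, hD, κ, t₀, t₁, hg, h₀, h₁, h₂⟩
    · rcases ih hp' with ⟨p₁, p₂, hp, h₁, h₂⟩ | ⟨p, hp, hsplit⟩
      · exact Or.inl ⟨p₁, p₂, hp, h₁.trans h₁', h₂.trans h₂'⟩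
      · exact Or.inr ⟨p, hp, hsplit.trans h₁' h₂'⟩
    · obtain ⟨p, hp, hrun⟩ := hr.lineage hlin hp'
      exact Or.inr ⟨p, hp, r, hmem, D₁, D₂, hD, κ, _, t₁, hg, hrun.trans h₀, h₁, h₂⟩

end Linearization

end TBPPcore

/-! ### The characterization of coverability -/

open TBPPcore in
/-- coverability of a two-process target in a TBPP `ℬ` is
characterized via its linearization `𝒜`: there is a branching rule applied at
the least common ancestor, reached from the source in the linearization, from
which both branches reach the two targets in the same time `t₁`. -/
theorem cover_iff_linearization_split
    {C X : Type} [DecidableEq C] (ℬ 𝒜 : TBPP C X) (hlin : IsLinearization ℬ 𝒜)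
    (S A B : X) (μ ν₁ ν₂ : Val C) :
    Cover ℬ {(S, μ)} {(A, ν₁), (B, ν₂)} ↔
      ∃ r ∈ ℬ.rules, ∃ D₁ D₂ : X, r.rhs = {D₁, D₂} ∧
        ∃ (κ : Val C) (t₀ t₁ : ℝ≥0), GuardSat κ r.guard ∧
          Run 𝒜 {(S, μ)} t₀ {(r.src, κ)} ∧
          Run 𝒜 {(D₁, applyUpdates κ r.update)} t₁ {(A, ν₁)} ∧
          Run 𝒜 {(D₂, applyUpdates κ r.update)} t₁ {(B, ν₂)} := by
  constructor
  · rintro ⟨γ, ⟨t, hrun⟩, hle⟩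
    rcases hrun.lineage_pair hlin hle with ⟨p₁, p₂, hp, -, -⟩ | ⟨p, hp, hsplit⟩
    · -- two distinct ancestors do not fit into the one-process initial configuration
      simpa using Multiset.card_le_card hp
    · obtain rfl := Multiset.mem_singleton.1 hp
      exact hsplit
  · rintro ⟨r, hr, D₁, D₂, hD, κ, t₀, t₁, hg, h₀, h₁, h₂⟩
    obtain ⟨γ₀, hrun₀, hle₀⟩ := h₀.lift hlin
    obtain ⟨γ₁, hrun₁, hle₁⟩ := h₁.lift hlin
    obtain ⟨γ₂, hrun₂, hle₂⟩ := h₂.lift hlin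
    obtain ⟨ρ, rfl⟩ := Multiset.le_iff_exists_add.1 hle₀
    have hbranch := (Step.discrete ρ r κ hr hg).run
    rw [add_comm, hD] at hbranch
    have hpar := (hrun₁.par hrun₂).idle ρ
    refine ⟨shift t₁ ρ + (γ₁ + γ₂), ⟨_, (hrun₀.trans hbranch).trans hpar⟩, ?_⟩
    exact (add_le_add hle₁ hle₂).trans (Multiset.le_add_left _ _)
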